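/- arXiv:2603.17660 — 6 statements merged into one kernel-verified Lean document; each statement's English description precedes it below -/
import Mathlib

section
/- For every integer t ≥ 3, the ideals I_{2^t+1,4} and I_{2^t,4} of F_2[w_2,w_3,w_4] are equal; equivalently, I_{2^t+1,4} = (g_{2^t-2}, g_{2^t-1}, g_{2^t}). -/
open MvPolynomial

/-- The polynomials `g_r = g_r^{(4)}` in `F_2[w_2,w_3,w_4]` (variables `X 0 = w_2`,
`X 1 = w_3`, `X 2 = w_4`): `g_0 = 1`, `g_r = 0` for `r < 0`, and
`g_r = w_2·g_{r-2} + w_3·g_{r-3} + w_4·g_{r-4}` for `r ≥ 1`. -/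
noncomputable def g4 : ℤ → MvPolynomial (Fin 3) (ZMod 2)
  | r =>
    if r ≤ 0 then (if r = 0 then 1 else 0)
    else X 0 * g4 (r - 2) + X 1 * g4 (r - 3) + X 2 * g4 (r - 4)
  termination_by r => r.toNat
  decreasing_by all_goals omega

/-- The ideal `I_{n,4} = (g_{n-3}, g_{n-2}, g_{n-1}, g_n)` of `F_2[w_2,w_3,w_4]`. -/
noncomputable def I4 (n : ℤ) : Ideal (MvPolynomial (Fin 3) (ZMod 2)) :=
  Ideal.span {g4 (n - 3), g4 (n - 2), g4 (n - 1), g4 n}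

/-!
In terms of the backward shift `S`, the recurrence says that `P(S) g` vanishes in positive degrees,
where `P = 1 - w₂ S² - w₃ S³ - w₄ S⁴`. Hence `P(S)^q g` vanishes in degrees at least `4q - 3`, and
for `q = 2^i` additivity of the Frobenius gives `P^q = 1 - w₂^q S^(2q) - w₃^q S^(3q) - w₄^q S^(4q)`.
The resulting recurrence expresses `g_{4q-3}` through `g_{2q-3}`, `g_{q-3}` and `g_{-3} = 0`, so
`g_{2^t-3} = 0` for all `t` by induction. Thus the first generator of `I_{2^t,4}` is zero, and
`g_{2^t+1}` is a combination of `g_{2^t-1}` and `g_{2^t-2}` alone, hence redundant in `I_{2^t+1,4}`.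
-/

section BackwardShift

open scoped Polynomial

variable {R : Type*} [CommRing R]

/-- The backward shift `u ↦ (r ↦ u (r - 1))` on two-sided sequences. A linear recurrence with
constant coefficients says that a polynomial in this operator annihilates the sequence. -/
def backwardShift (R : Type*) [CommRing R] : Module.End R (ℤ → R) :=
  LinearMap.funLeft R R (· - 1)

lemma backwardShift_pow_apply (k : ℕ) (u : ℤ → R) (r : ℤ) :
    (backwardShift R ^ k) u r = u (r - k) := by
  induction k generalizing r with
  | zero => simp
  | succ k ih =>
    rw [pow_succ', Module.End.mul_apply, backwardShift, LinearMap.funLeft_apply,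
      ← backwardShift, ih]
    congr 1
    push_cast
    ring

lemma aeval_backwardShift_apply (P : R[X]) (u : ℤ → R) (r : ℤ) :
    Polynomial.aeval (backwardShift R) P u r = P.sum fun k a ↦ a * u (r - k) := by
  simp [Polynomial.aeval_eq_sum_range, P.sum_over_range, LinearMap.sum_apply,
    backwardShift_pow_apply]

lemma aeval_backwardShift_apply_eq_zero {N : ℤ} {u : ℤ → R} (hu : ∀ r, N ≤ r → u r = 0)
    (P : R[X]) {r : ℤ} (hr : N + P.natDegree ≤ r) :
    Polynomial.aeval (backwardShift R) P u r = 0 := by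
  rw [aeval_backwardShift_apply]
  refine Finset.sum_eq_zero fun k hk ↦ ?_
  have hk_le : k ≤ P.natDegree := Polynomial.le_natDegree_of_mem_supp k hk
  simp only [hu (r - k) (by omega), mul_zero]

lemma aeval_backwardShift_pow_succ_apply_eq_zero {N : ℤ} {P : R[X]} {u : ℤ → R}
    (hu : ∀ r, N ≤ r → Polynomial.aeval (backwardShift R) P u r = 0) (m : ℕ) {r : ℤ}
    (hr : N + m * P.natDegree ≤ r) :
    Polynomial.aeval (backwardShift R) (P ^ (m + 1)) u r = 0 := by
  rw [pow_succ, map_mul, Module.End.mul_apply]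
  have hdeg : ((P ^ m).natDegree : ℤ) ≤ m * P.natDegree := mod_cast Polynomial.natDegree_pow_le
  exact aeval_backwardShift_apply_eq_zero hu _ (by linarith)

variable {ι : Type*} [Fintype ι]

/-- The polynomial `1 - ∑ j, a j X ^ lag j`. Its value at the backward shift annihilates `u` at `r`
exactly when `u r = ∑ j, a j * u (r - lag j)`. -/
noncomputable def recurrencePoly (a : ι → R) (lag : ι → ℕ) : R[X] :=
  1 - ∑ j, Polynomial.monomial (lag j) (a j)

lemma natDegree_recurrencePoly_le (a : ι → R) {lag : ι → ℕ} {d : ℕ} (hlag : ∀ j, lag j ≤ d) :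
    (recurrencePoly a lag).natDegree ≤ d := by
  have hsum : (∑ j, Polynomial.monomial (lag j) (a j)).natDegree ≤ d :=
    Polynomial.natDegree_sum_le_of_forall_le _ _ fun j _ ↦
      (Polynomial.natDegree_monomial_le _).trans (hlag j)
  simpa [recurrencePoly] using Polynomial.natDegree_sub_le_of_le (p := 1) (m := 0) (by simp) hsum

lemma recurrencePoly_pow_char_pow (p : ℕ) [ExpChar R p] (a : ι → R) (lag : ι → ℕ) (i : ℕ) :
    recurrencePoly a lag ^ p ^ i =
      recurrencePoly (fun j ↦ a j ^ p ^ i) (fun j ↦ lag j * p ^ i) := by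
  simp only [recurrencePoly, sub_pow_expChar_pow, one_pow, sum_pow_char_pow,
    Polynomial.monomial_pow]

lemma aeval_recurrencePoly_apply_eq_zero_iff (a : ι → R) (lag : ι → ℕ) (u : ℤ → R) (r : ℤ) :
    Polynomial.aeval (backwardShift R) (recurrencePoly a lag) u r = 0 ↔
      u r = ∑ j, a j * u (r - lag j) := by
  simp [recurrencePoly, Polynomial.aeval_monomial, sub_eq_zero, backwardShift_pow_apply]

theorem recurrence_char_pow (p : ℕ) [ExpChar R p] {a : ι → R} {lag : ι → ℕ} {d : ℕ}
    (hlag : ∀ j, lag j ≤ d) {u : ℤ → R} {N : ℤ}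
    (hu : ∀ r, N ≤ r → u r = ∑ j, a j * u (r - lag j)) (i : ℕ) {r : ℤ}
    (hr : N + (p ^ i - 1) * d ≤ r) :
    u r = ∑ j, a j ^ p ^ i * u (r - (lag j * p ^ i : ℕ)) := by
  simp only [← aeval_recurrencePoly_apply_eq_zero_iff] at hu
  rw [← aeval_recurrencePoly_apply_eq_zero_iff, ← recurrencePoly_pow_char_pow p]
  obtain ⟨m, hm⟩ : ∃ m, p ^ i = m + 1 :=
    Nat.exists_eq_succ_of_ne_zero (expChar_pow_pos R p i).ne'
  rw [hm]
  refine aeval_backwardShift_pow_succ_apply_eq_zero hu m ?_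
  calc N + m * ((recurrencePoly a lag).natDegree : ℤ)
      ≤ N + m * d := by gcongr; exact natDegree_recurrencePoly_le a hlag
    _ = N + (p ^ i - 1) * d := by rw [← Nat.cast_pow, hm]; push_cast; ring
    _ ≤ r := hr

end BackwardShift

lemma g4_of_neg {r : ℤ} (hr : r < 0) : g4 r = 0 := by
  rw [g4, if_pos hr.le, if_neg hr.ne]

lemma g4_of_pos {r : ℤ} (hr : 0 < r) :
    g4 r = X 0 * g4 (r - 2) + X 1 * g4 (r - 3) + X 2 * g4 (r - 4) := by
  rw [g4, if_neg hr.not_ge]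

lemma g4_eq_two_pow_recurrence (i : ℕ) {r : ℤ} (hr : 4 * 2 ^ i - 3 ≤ r) :
    g4 r = X 0 ^ 2 ^ i * g4 (r - 2 * 2 ^ i) + X 1 ^ 2 ^ i * g4 (r - 3 * 2 ^ i)
      + X 2 ^ 2 ^ i * g4 (r - 4 * 2 ^ i) := by
  have hrec (s : ℤ) (hs : 1 ≤ s) : g4 s = ∑ j : Fin 3, X j * g4 (s - (j + 2 : ℕ)) := by
    simpa [Fin.sum_univ_three] using g4_of_pos (zero_lt_one.trans_le hs)
  have hlag (j : Fin 3) : (j + 2 : ℕ) ≤ 4 := by omega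
  have hpow := recurrence_char_pow 2 hlag hrec i (r := r) (by push_cast; linarith)
  simpa [Fin.sum_univ_three, mul_comm] using hpow

lemma g4_two_pow_sub_three (t : ℕ) : g4 (2 ^ t - 3) = 0 := by
  induction t using Nat.twoStepInduction with
  | zero => exact g4_of_neg (by norm_num)
  | one => exact g4_of_neg (by norm_num)
  | more t ih ih_succ =>
    have hpow : (2 : ℤ) ^ (t + 2) = 4 * 2 ^ t := by ring
    rw [g4_eq_two_pow_recurrence t (by rw [hpow]),
      show (2 : ℤ) ^ (t + 2) - 3 - 2 * 2 ^ t = 2 ^ (t + 1) - 3 by ring,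
      show (2 : ℤ) ^ (t + 2) - 3 - 3 * 2 ^ t = 2 ^ t - 3 by ring,
      show (2 : ℤ) ^ (t + 2) - 3 - 4 * 2 ^ t = -3 by ring,
      ih, ih_succ, g4_of_neg (by norm_num : (-3 : ℤ) < 0)]
    simp only [mul_zero, add_zero]

lemma I4_eq_span_of_g4_sub_three_eq_zero {n : ℤ} (h : g4 (n - 3) = 0) :
    I4 n = Ideal.span {g4 (n - 2), g4 (n - 1), g4 n} := by
  rw [I4, h, Ideal.span_insert_zero]

lemma g4_add_one_mem_span {n : ℤ} (hn : 0 ≤ n) (h : g4 (n - 3) = 0) :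
    g4 (n + 1) ∈ Ideal.span {g4 (n - 2), g4 (n - 1), g4 n} := by
  have hrec : g4 (n + 1) = X 0 * g4 (n - 1) + X 1 * g4 (n - 2) := by
    rw [g4_of_pos (by omega), show n + 1 - 2 = n - 1 by ring, show n + 1 - 3 = n - 2 by ring,
      show n + 1 - 4 = n - 3 by ring, h, mul_zero, add_zero]
  rw [hrec]
  exact add_mem (Ideal.mul_mem_left _ _ (Ideal.subset_span (by simp)))
    (Ideal.mul_mem_left _ _ (Ideal.subset_span (by simp)))

lemma I4_add_one_eq_span_of_g4_sub_three_eq_zero {n : ℤ} (hn : 0 ≤ n) (h : g4 (n - 3) = 0) :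
    I4 (n + 1) = Ideal.span {g4 (n - 2), g4 (n - 1), g4 n} := by
  have hgenerators : ({g4 (n + 1 - 3), g4 (n + 1 - 2), g4 (n + 1 - 1), g4 (n + 1)} : Set _) =
      insert (g4 (n + 1)) {g4 (n - 2), g4 (n - 1), g4 n} := by
    rw [show n + 1 - 3 = n - 2 by ring, show n + 1 - 2 = n - 1 by ring,
      show n + 1 - 1 = n by ring]
    grind
  rw [I4, hgenerators]
  exact Submodule.span_insert_eq_span (g4_add_one_mem_span hn h)

lemma I4_two_pow_eq_span (t : ℕ) :
    I4 (2 ^ t) = Ideal.span {g4 (2 ^ t - 2), g4 (2 ^ t - 1), g4 (2 ^ t)} :=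
  I4_eq_span_of_g4_sub_three_eq_zero (g4_two_pow_sub_three t)

lemma I4_two_pow_add_one_eq_span (t : ℕ) :
    I4 (2 ^ t + 1) = Ideal.span {g4 (2 ^ t - 2), g4 (2 ^ t - 1), g4 (2 ^ t)} :=
  I4_add_one_eq_span_of_g4_sub_three_eq_zero (by positivity) (g4_two_pow_sub_three t)

/-- For every integer `t ≥ 3`, the ideals `I_{2^t+1,4}` and `I_{2^t,4}` are equal;
equivalently, `I_{2^t+1,4} = (g_{2^t-2}, g_{2^t-1}, g_{2^t})`. -/
theorem stmt0 (t : ℕ) (ht : 3 ≤ t) :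
    I4 (2 ^ t + 1) = I4 (2 ^ t) ∧
      I4 (2 ^ t + 1) =
        Ideal.span {g4 (2 ^ t - 2), g4 (2 ^ t - 1), g4 (2 ^ t)} :=
  ⟨(I4_two_pow_add_one_eq_span t).trans (I4_two_pow_eq_span t).symm,
    I4_two_pow_add_one_eq_span t⟩
end

section
/- For every integer t ≥ 3, the ideals I_{2^t,3} and I_{2^t-1,3} of F_2[w_2,w_3] are equal; equivalently, I_{2^t,3} = (g^{(3)}_{2^t-2}, g^{(3)}_{2^t-1}). -/
open MvPolynomial
/-- The polynomials `g_r^{(3)}` in `F_2[w_2,w_3]` (variables `X 0 = w_2`, `X 1 = w_3`):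
`g^{(3)}_0 = 1`, `g^{(3)}_r = 0` for `r < 0`, and
`g^{(3)}_r = w_2·g^{(3)}_{r-2} + w_3·g^{(3)}_{r-3}` for `r ≥ 1`. -/
noncomputable def g3 : ℤ → MvPolynomial (Fin 2) (ZMod 2)
  | r =>
    if r ≤ 0 then (if r = 0 then 1 else 0)
    else X 0 * g3 (r - 2) + X 1 * g3 (r - 3)
  termination_by r => r.toNat
  decreasing_by all_goals omega

/-- The ideal `I_{n,3} = (g^{(3)}_{n-2}, g^{(3)}_{n-1}, g^{(3)}_n)` of `F_2[w_2,w_3]`. -/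
noncomputable def I3 (n : ℤ) : Ideal (MvPolynomial (Fin 2) (ZMod 2)) :=
  Ideal.span {g3 (n - 2), g3 (n - 1), g3 n}

/-!
In characteristic two, substituting `g_r = w₂ g_{r-2} + w₃ g_{r-3}` into itself makes the two mixed
terms cancel, so `g_r = w₂^{2^k} g_{r-2·2^k} + w₃^{2^k} g_{r-3·2^k}` for `r ≥ 3·2^k - 2`. With
`r = 2^{k+2} - 3` the two indices on the right are `2^{k+1} - 3` and `2^k - 3`; since `2^0 - 3` and
`2^1 - 3` are negative, `g_{2^t-3} = 0` for all `t`. At `n = 2^t` this kills the first generator of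
`I_{n-1,3}`, and it makes the last generator of `I_{n,3}` equal to `w₂ g_{n-2}`.
-/

section CharTwo

variable {R : Type*} [CommRing R] [CharP R 2] {f : ℤ → R} {a b : R} {m n N : ℤ}

theorem recurrence_double (hn : 0 ≤ n) (hmn : m ≤ n)
    (hf : ∀ r, N ≤ r → f r = a * f (r - m) + b * f (r - n)) {r : ℤ} (hr : N + n ≤ r) :
    f r = a ^ 2 * f (r - 2 * m) + b ^ 2 * f (r - 2 * n) := by
  have mixed_cancel : a * b * f (r - m - n) + a * b * f (r - m - n) = 0 :=
    CharTwo.add_self_eq_zero _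
  calc f r = a * f (r - m) + b * f (r - n) := hf r (by lia)
    _ = a * (a * f (r - m - m) + b * f (r - m - n)) +
        b * (a * f (r - n - m) + b * f (r - n - n)) := by
      rw [hf (r - m) (by lia), hf (r - n) (by lia)]
    _ = a ^ 2 * f (r - 2 * m) + b ^ 2 * f (r - 2 * n) := by
      rw [sub_right_comm r n m, sub_sub r m m, sub_sub r n n, ← two_mul, ← two_mul]
      linear_combination mixed_cancel

theorem recurrence_two_pow (hn : 0 ≤ n) (hmn : m ≤ n)
    (hf : ∀ r, N ≤ r → f r = a * f (r - m) + b * f (r - n)) (k : ℕ) {r : ℤ}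
    (hr : N + (2 ^ k - 1) * n ≤ r) :
    f r = a ^ 2 ^ k * f (r - 2 ^ k * m) + b ^ 2 ^ k * f (r - 2 ^ k * n) := by
  induction k generalizing r with
  | zero => simpa using hf r (by simpa using hr)
  | succ k ih =>
    have hr' : N + (2 ^ k - 1) * n + 2 ^ k * n ≤ r := by linear_combination hr
    have hmn' : 2 ^ k * m ≤ 2 ^ k * n := by gcongr
    rw [pow_succ 2 k, pow_mul, pow_mul, pow_succ' (2 : ℤ), mul_assoc, mul_assoc]
    exact recurrence_double (by positivity) hmn' (fun _ ↦ ih) hr'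

end CharTwo

theorem g3_of_neg {r : ℤ} (hr : r < 0) : g3 r = 0 := by
  rw [g3, if_pos hr.le, if_neg hr.ne]

theorem g3_of_one_le {r : ℤ} (hr : 1 ≤ r) : g3 r = X 0 * g3 (r - 2) + X 1 * g3 (r - 3) := by
  rw [g3, if_neg (by lia)]

theorem g3_two_pow_recurrence (k : ℕ) {r : ℤ} (hr : 3 * 2 ^ k - 2 ≤ r) :
    g3 r = X 0 ^ 2 ^ k * g3 (r - 2 ^ k * 2) + X 1 ^ 2 ^ k * g3 (r - 2 ^ k * 3) :=
  recurrence_two_pow (N := 1) (by norm_num) (by norm_num) (fun _ ↦ g3_of_one_le) k (by lia)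

theorem g3_two_pow_sub_three (t : ℕ) : g3 (2 ^ t - 3) = 0 := by
  induction t using Nat.twoStepInduction with
  | zero => exact g3_of_neg (by norm_num)
  | one => exact g3_of_neg (by norm_num)
  | more t ih ih' =>
    have one_le : (1 : ℤ) ≤ 2 ^ t := one_le_pow₀ one_le_two
    have first_index : (2 : ℤ) ^ (t + 2) - 3 - 2 ^ t * 2 = 2 ^ (t + 1) - 3 := by ring
    have second_index : (2 : ℤ) ^ (t + 2) - 3 - 2 ^ t * 3 = 2 ^ t - 3 := by ring
    rw [g3_two_pow_recurrence t (by lia), first_index, second_index, ih, ih', mul_zero, mul_zero,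
      add_zero]

section VanishingGenerator

variable {n : ℤ}

theorem I3_eq_span_pair (hn : 1 ≤ n) (hg : g3 (n - 3) = 0) :
    I3 n = Ideal.span {g3 (n - 2), g3 (n - 1)} := by
  have last_eq : g3 n = X 0 * g3 (n - 2) := by rw [g3_of_one_le hn, hg, mul_zero, add_zero]
  have last_mem : g3 n ∈ Ideal.span {g3 (n - 2), g3 (n - 1)} :=
    last_eq ▸ Ideal.mul_mem_left _ _ (Ideal.subset_span (Set.mem_insert _ _))
  rw [I3, Set.pair_comm (g3 (n - 1)), Set.insert_comm]
  exact Submodule.span_insert_eq_span last_mem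

theorem I3_sub_one_eq_span_pair (hg : g3 (n - 3) = 0) :
    I3 (n - 1) = Ideal.span {g3 (n - 2), g3 (n - 1)} := by
  rw [I3, show n - 1 - 2 = n - 3 by ring, show n - 1 - 1 = n - 2 by ring, hg,
    Ideal.span_insert_zero]

end VanishingGenerator

/-- For every integer `t ≥ 3`, the ideals `I_{2^t,3}` and `I_{2^t-1,3}` are equal;
equivalently, `I_{2^t,3} = (g^{(3)}_{2^t-2}, g^{(3)}_{2^t-1})`. -/
theorem stmt1 (t : ℕ) (ht : 3 ≤ t) :
    I3 (2 ^ t) = I3 (2 ^ t - 1) ∧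
      I3 (2 ^ t) = Ideal.span {g3 (2 ^ t - 2), g3 (2 ^ t - 1)} := by
  have hg : g3 (2 ^ t - 3) = 0 := g3_two_pow_sub_three t
  have hpair := I3_eq_span_pair (one_le_pow₀ one_le_two) hg
  exact ⟨hpair.trans (I3_sub_one_eq_span_pair hg).symm, hpair⟩
end

section
/- For every integer t ≥ 3, regarding F_2[w_2,w_3] as a subring of F_2[w_2,w_3,w_4], one has I_{2^t,3} = I_{2^t,4} ∩ F_2[w_2,w_3]; that is, a polynomial in the variables w_2, w_3 alone lies in I_{2^t,4} if and only if it lies in I_{2^t,3}. -/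
open MvPolynomial

/-- The natural inclusion `F_2[w_2,w_3] ⊆ F_2[w_2,w_3,w_4]`. -/
noncomputable def incl : MvPolynomial (Fin 2) (ZMod 2) →+* MvPolynomial (Fin 3) (ZMod 2) :=
  (rename (Fin.castSucc : Fin 2 → Fin 3)).toRingHom

/-!
In `R⟦x⟧` with `R` of characteristic two, let `P = 1 + w₂x² + w₃x³ + w₄x⁴` and
`G = ∑ g_r x^r = P⁻¹`. Then `G = P · G²`, and `G²` is a series in `x²` with coefficients `g_m²`.
Comparing coefficients gives `g_{2m+1} = w₃ g_{m-1}²` and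
`g_{2m} = g_m² + w₂ g_{m-1}² + w₄ g_{m-2}²`. By induction on `t`, `g_{2^t-3} = 0`, so that `w₄`
never enters `g_{2^t-2}` and `g_{2^t-1}`; these two are therefore the corresponding `g⁽³⁾`. Since
also `g⁽³⁾_{2^t} = w₂ g⁽³⁾_{2^t-2}`, the inclusion sends `I_{2^t,3}` into `I_{2^t,4}`, while its
retraction `w₄ ↦ 0` sends `g_r` to `g⁽³⁾_r`, hence `I_{2^t,4}` into `I_{2^t,3}`.
-/

/-- `G` is the coefficient sequence of the power series `1 / (1 - a x² - b x³ - c x⁴)`, extended by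
zero to negative indices. This treats `g4` and `g3` (the latter with `c = 0`) uniformly. -/
structure IsReciprocalSeq {R : Type*} [CommSemiring R] (a b c : R) (G : ℤ → R) : Prop where
  eq_zero_of_neg : ∀ r < 0, G r = 0
  zero : G 0 = 1
  recurrence : ∀ r > 0, G r = a * G (r - 2) + b * G (r - 3) + c * G (r - 4)

namespace IsReciprocalSeq

section CommSemiring

variable {R S : Type*} [CommSemiring R] [CommSemiring S] {a b c : R} {G H : ℤ → R}

theorem map (hG : IsReciprocalSeq a b c G) (f : R →+* S) :
    IsReciprocalSeq (f a) (f b) (f c) (fun r => f (G r)) where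
  eq_zero_of_neg r hr := by rw [hG.eq_zero_of_neg r hr, map_zero]
  zero := by rw [hG.zero, map_one]
  recurrence r hr := by rw [hG.recurrence r hr]; simp only [map_add, map_mul]

theorem unique (hG : IsReciprocalSeq a b c G) (hH : IsReciprocalSeq a b c H) (r : ℤ) :
    G r = H r := by
  induction r using Int.strongRec (m := 0) with
  | lt r hr => rw [hG.eq_zero_of_neg r hr, hH.eq_zero_of_neg r hr]
  | ge r hr ih =>
    obtain rfl | hr := hr.eq_or_lt
    · rw [hG.zero, hH.zero]
    · rw [hG.recurrence r hr, hH.recurrence r hr, ih (r - 2) (by lia), ih (r - 3) (by lia),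
        ih (r - 4) (by lia)]

end CommSemiring

section CharTwo

variable {R : Type*} [CommRing R] [CharP R 2] {a b c d : R} {G H : ℤ → R}

theorem apply_two_mul_add_one_and_two_mul (hG : IsReciprocalSeq a b c G) (m : ℤ) :
    G (2 * m + 1) = b * G (m - 1) ^ 2 ∧
      G (2 * m) = G m ^ 2 + a * G (m - 1) ^ 2 + c * G (m - 2) ^ 2 := by
  have two_eq_zero : (2 : R) = 0 := CharTwo.two_eq_zero
  induction m using Int.strongRec (m := 0) with
  | lt m hm =>
    simp [hG.eq_zero_of_neg (2 * m + 1) (by lia), hG.eq_zero_of_neg (m - 1) (by lia),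
      hG.eq_zero_of_neg (2 * m) (by lia), hG.eq_zero_of_neg m hm,
      hG.eq_zero_of_neg (m - 2) (by lia)]
  | ge m hm ih =>
    have odd₁ : G (2 * m - 1) = b * G (m - 2) ^ 2 := by
      convert (ih (m - 1) (by lia)).1 using 1 <;> ring_nf
    have odd₂ : G (2 * m - 3) = b * G (m - 3) ^ 2 := by
      convert (ih (m - 2) (by lia)).1 using 1 <;> ring_nf
    have even₁ : G (2 * m - 2) = G (m - 1) ^ 2 + a * G (m - 2) ^ 2 + c * G (m - 3) ^ 2 := by
      convert (ih (m - 1) (by lia)).2 using 1 <;> ring_nf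
    have even₂ : G (2 * m - 4) = G (m - 2) ^ 2 + a * G (m - 3) ^ 2 + c * G (m - 4) ^ 2 := by
      convert (ih (m - 2) (by lia)).2 using 1 <;> ring_nf
    constructor
    · have rec_odd : G (2 * m + 1) = a * G (2 * m - 1) + b * G (2 * m - 2) + c * G (2 * m - 3) := by
        convert hG.recurrence (2 * m + 1) (by lia) using 1; ring_nf
      rw [rec_odd, odd₁, even₁, odd₂]
      linear_combination (a * b * G (m - 2) ^ 2 + b * c * G (m - 3) ^ 2) * two_eq_zero
    · obtain rfl | hm := hm.eq_or_lt
      · simp [hG.zero, hG.eq_zero_of_neg]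
      · rw [hG.recurrence (2 * m) (by lia), hG.recurrence m hm, CharTwo.add_sq, CharTwo.add_sq,
          even₁, odd₂, even₂]
        linear_combination a * c * G (m - 3) ^ 2 * two_eq_zero

theorem apply_two_mul_add_one (hG : IsReciprocalSeq a b c G) (m : ℤ) :
    G (2 * m + 1) = b * G (m - 1) ^ 2 :=
  (hG.apply_two_mul_add_one_and_two_mul m).1

theorem apply_two_mul (hG : IsReciprocalSeq a b c G) (m : ℤ) :
    G (2 * m) = G m ^ 2 + a * G (m - 1) ^ 2 + c * G (m - 2) ^ 2 :=
  (hG.apply_two_mul_add_one_and_two_mul m).2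

theorem apply_two_pow_sub_three (hG : IsReciprocalSeq a b c G) (t : ℕ) :
    G (2 ^ t - 3) = 0 := by
  induction t with
  | zero => exact hG.eq_zero_of_neg _ (by norm_num)
  | succ t ih =>
    rw [show (2 : ℤ) ^ (t + 1) - 3 = 2 * (2 ^ t - 2) + 1 by ring, hG.apply_two_mul_add_one,
      show (2 : ℤ) ^ t - 2 - 1 = 2 ^ t - 3 by ring, ih]
    simp

theorem apply_two_pow_succ_sub_one (hG : IsReciprocalSeq a b c G) (t : ℕ) :
    G (2 ^ (t + 1) - 1) = b * G (2 ^ t - 2) ^ 2 := by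
  rw [show (2 : ℤ) ^ (t + 1) - 1 = 2 * (2 ^ t - 1) + 1 by ring, hG.apply_two_mul_add_one,
    show (2 : ℤ) ^ t - 1 - 1 = 2 ^ t - 2 by ring]

theorem apply_two_pow_succ_sub_two (hG : IsReciprocalSeq a b c G) (t : ℕ) :
    G (2 ^ (t + 1) - 2) = G (2 ^ t - 1) ^ 2 + a * G (2 ^ t - 2) ^ 2 := by
  rw [show (2 : ℤ) ^ (t + 1) - 2 = 2 * (2 ^ t - 1) by ring, hG.apply_two_mul,
    show (2 : ℤ) ^ t - 1 - 1 = 2 ^ t - 2 by ring, show (2 : ℤ) ^ t - 1 - 2 = 2 ^ t - 3 by ring,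
    hG.apply_two_pow_sub_three]
  simp

theorem apply_two_pow_sub_two_and_sub_one_eq (hG : IsReciprocalSeq a b c G)
    (hH : IsReciprocalSeq a b d H) (t : ℕ) :
    G (2 ^ t - 2) = H (2 ^ t - 2) ∧ G (2 ^ t - 1) = H (2 ^ t - 1) := by
  induction t with
  | zero => simp [hG.zero, hH.zero, hG.eq_zero_of_neg, hH.eq_zero_of_neg]
  | succ t ih =>
    simp only [hG.apply_two_pow_succ_sub_two, hH.apply_two_pow_succ_sub_two,
      hG.apply_two_pow_succ_sub_one, hH.apply_two_pow_succ_sub_one, ih, and_self]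

end CharTwo

end IsReciprocalSeq

theorem isReciprocalSeq_g4 : IsReciprocalSeq (X 0) (X 1) (X 2) g4 where
  eq_zero_of_neg r hr := by rw [g4, if_pos hr.le, if_neg hr.ne]
  zero := by rw [g4]; simp
  recurrence r hr := by rw [g4, if_neg hr.not_ge]

theorem isReciprocalSeq_g3 : IsReciprocalSeq (X 0) (X 1) 0 g3 where
  eq_zero_of_neg r hr := by rw [g3, if_pos hr.le, if_neg hr.ne]
  zero := by rw [g3]; simp
  recurrence r hr := by rw [g3, if_neg hr.not_ge, zero_mul, add_zero]

theorem isReciprocalSeq_incl_g3 : IsReciprocalSeq (X 0) (X 1) 0 (fun r => incl (g3 r)) := by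
  simpa [incl] using isReciprocalSeq_g3.map incl

/-- The substitution `w₄ ↦ 0`, a retraction of the inclusion `incl`. -/
noncomputable def setW4Zero :
    MvPolynomial (Fin 3) (ZMod 2) →ₐ[ZMod 2] MvPolynomial (Fin 2) (ZMod 2) :=
  aeval ![X 0, X 1, 0]

theorem setW4Zero_incl (p : MvPolynomial (Fin 2) (ZMod 2)) : setW4Zero (incl p) = p := by
  have comp_rename : setW4Zero.comp (rename Fin.castSucc) = AlgHom.id _ _ := by
    ext i : 1
    fin_cases i <;> simp [setW4Zero]
  exact DFunLike.congr_fun comp_rename p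

theorem setW4Zero_g4 (r : ℤ) : setW4Zero (g4 r) = g3 r := by
  have reciprocal_image : IsReciprocalSeq (X 0) (X 1) 0 (fun r => setW4Zero (g4 r)) := by
    simpa [setW4Zero] using isReciprocalSeq_g4.map setW4Zero.toRingHom
  exact reciprocal_image.unique isReciprocalSeq_g3 r

theorem I4_le_comap_setW4Zero_I3 {n : ℤ} (hn : g3 (n - 3) = 0) :
    I4 n ≤ Ideal.comap setW4Zero (I3 n) := by
  rw [I4, Ideal.span_le]
  rintro _ (rfl | rfl | rfl | rfl) <;> rw [SetLike.mem_coe, Ideal.mem_comap, setW4Zero_g4]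
  · exact hn ▸ zero_mem _
  all_goals exact Ideal.subset_span (by simp)

theorem comap_incl_I4_le_I3 {n : ℤ} (hn : g3 (n - 3) = 0) :
    Ideal.comap incl (I4 n) ≤ I3 n := by
  intro p hp
  simpa only [Ideal.mem_comap, setW4Zero_incl] using I4_le_comap_setW4Zero_I3 hn hp

theorem I3_le_comap_incl_I4 {n : ℤ} (hn : 0 < n) (sub_three : g3 (n - 3) = 0)
    (sub_two : g4 (n - 2) = incl (g3 (n - 2))) (sub_one : g4 (n - 1) = incl (g3 (n - 1))) :
    I3 n ≤ Ideal.comap incl (I4 n) := by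
  have sub_two_mem : incl (g3 (n - 2)) ∈ I4 n := sub_two ▸ Ideal.subset_span (by simp)
  have sub_one_mem : incl (g3 (n - 1)) ∈ I4 n := sub_one ▸ Ideal.subset_span (by simp)
  have g3_eq : g3 n = X 0 * g3 (n - 2) := by
    rw [isReciprocalSeq_g3.recurrence n hn, sub_three, mul_zero, zero_mul, add_zero, add_zero]
  rw [I3, Ideal.span_le]
  rintro _ (rfl | rfl | rfl) <;> rw [SetLike.mem_coe, Ideal.mem_comap]
  · exact sub_two_mem
  · exact sub_one_mem
  · rw [g3_eq, map_mul]
    exact Ideal.mul_mem_left _ _ sub_two_mem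

/-- For every integer `t ≥ 3`, regarding `F_2[w_2,w_3]` as a subring of `F_2[w_2,w_3,w_4]`,
one has `I_{2^t,3} = I_{2^t,4} ∩ F_2[w_2,w_3]`: a polynomial in `w_2, w_3` alone lies in
`I_{2^t,4}` if and only if it lies in `I_{2^t,3}`. -/
theorem stmt2 (t : ℕ) (ht : 3 ≤ t) :
    Ideal.comap incl (I4 (2 ^ t)) = I3 (2 ^ t) := by
  have sub_three : g3 (2 ^ t - 3) = 0 := isReciprocalSeq_g3.apply_two_pow_sub_three t
  obtain ⟨sub_two, sub_one⟩ :=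
    isReciprocalSeq_g4.apply_two_pow_sub_two_and_sub_one_eq isReciprocalSeq_incl_g3 t
  exact le_antisymm (comap_incl_I4_le_I3 sub_three)
    (I3_le_comap_incl_I4 (by positivity) sub_three sub_two sub_one)
end

section
/- Let t ≥ 3 and let p_0, p_1, …, p_{2^{t-2}-1} be polynomials in F_2[w_2,w_3], regarded as elements of F_2[w_2,w_3,w_4]. Then the sum Σ_{j=0}^{2^{t-2}-1} p_j·w_4^j belongs to I_{2^t,4} if and only if p_j belongs to I_{2^t,3} for every j ∈ {0,1,…,2^{t-2}-1}. -/
open MvPolynomial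

/-!
The values `g_{2^t-1}, g_{2^t-2}, g_{2^t-3}` do not involve `w_4`. Iterating the recurrence in
characteristic two gives `g_r = w_2^q g_{r-2q} + w_3^q g_{r-3q} + w_4^q g_{r-4q}` for `q = 2^s`, and
for `r = 4q - i` with `i > 0` the last term has negative index. These three values therefore agree
with the corresponding `g^{(3)}`, and the third one vanishes. Hence `I_{2^t,4}` is generated by
`I_{2^t,3}` together with `g_{2^t}`. As a polynomial in `w_4` over `F_2[w_2,w_3]`, the latter is
monic of degree `2^{t-2}`, so a polynomial of smaller degree in `w_4` lies in `I_{2^t,4}` only if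
its coefficients already lie in `I_{2^t,3}`.
-/

section MonicQuotient

open scoped Polynomial

variable {R : Type*} [CommRing R] {J : Ideal R} {f : R[X]}

lemma mem_map_C_sup_span_iff_of_degree_lt (hf : f.Monic) {q : R[X]} (hq : q.degree < f.degree) :
    q ∈ J.map Polynomial.C ⊔ Ideal.span {f} ↔ q ∈ J.map Polynomial.C := by
  refine ⟨fun h => ?_, fun h => Ideal.mem_sup_left h⟩
  set π : R →+* R ⧸ J := Ideal.Quotient.mk J
  have ker_π : RingHom.ker (Polynomial.mapRingHom π) = J.map Polynomial.C := by
    rw [Polynomial.ker_mapRingHom, Ideal.mk_ker]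
  have f_dvd_q : f.map π ∣ q.map π := by
    obtain ⟨a, ha, b, hb, rfl⟩ := Submodule.mem_sup.mp h
    have a_zero : a.map π = 0 := by rwa [← ker_π] at ha
    rw [Polynomial.map_add, a_zero, zero_add]
    exact Polynomial.map_dvd π (Ideal.mem_span_singleton.mp hb)
  rw [← ker_π, RingHom.mem_ker, Polynomial.coe_mapRingHom]
  by_contra q_ne_zero
  have : Nontrivial (R ⧸ J) := Polynomial.nontrivial_iff.mp ⟨_, _, q_ne_zero⟩
  refine (hf.map π).not_dvd_of_degree_lt q_ne_zero ?_ f_dvd_q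
  calc (q.map π).degree ≤ q.degree := Polynomial.degree_map_le
    _ < f.degree := hq
    _ = (f.map π).degree := (hf.degree_map π).symm

lemma coeff_sum_range_C_mul_X_pow (p : ℕ → R) (N k : ℕ) :
    (∑ j ∈ Finset.range N, Polynomial.C (p j) * Polynomial.X ^ j).coeff k =
      if k < N then p k else 0 := by
  simp [Polynomial.finsetSum_coeff, Polynomial.coeff_X_pow]

lemma sum_range_C_mul_X_pow_mem_map_C_sup_span_iff {N : ℕ} (hf : f.IsMonicOfDegree N)
    (p : ℕ → R) :
    ∑ j ∈ Finset.range N, Polynomial.C (p j) * Polynomial.X ^ j ∈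
        J.map Polynomial.C ⊔ Ideal.span {f} ↔
      ∀ j < N, p j ∈ J := by
  nontriviality R
  have hdeg : (∑ j ∈ Finset.range N, Polynomial.C (p j) * Polynomial.X ^ j).degree < f.degree := by
    rw [Polynomial.degree_eq_natDegree hf.ne_zero, hf.natDegree_eq,
      Polynomial.degree_lt_iff_coeff_zero]
    intro k hk
    rw [coeff_sum_range_C_mul_X_pow, if_neg hk.not_gt]
  simp only [mem_map_C_sup_span_iff_of_degree_lt hf.monic hdeg, Ideal.mem_map_C_iff,
    coeff_sum_range_C_mul_X_pow]
  refine forall_congr' fun j => ?_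
  split_ifs with hj <;> simp [hj]

end MonicQuotient

/-- The sequence of coefficients of `1 / (1 - a x² - b x³ - c x⁴)`, extended by zero to negative
indices. Modulo two, with `a`, `b`, `c` the Stiefel-Whitney classes `w_2`, `w_3`, `w_4`, these are
the dual classes; `c = 0` covers the case where there is no `w_4`. -/
structure IsDualClassSeq {R : Type*} [CommRing R] (a b c : R) (G : ℤ → R) : Prop where
  zero : G 0 = 1
  of_neg : ∀ r < 0, G r = 0
  recurrence : ∀ r > 0, G r = a * G (r - 2) + b * G (r - 3) + c * G (r - 4)

namespace IsDualClassSeq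

section CommRing

variable {R S : Type*} [CommRing R] [CommRing S] {a b c c' : R} {G G' : ℤ → R}

lemma map {F : Type*} [FunLike F R S] [RingHomClass F R S] (hG : IsDualClassSeq a b c G) (φ : F) :
    IsDualClassSeq (φ a) (φ b) (φ c) (fun r => φ (G r)) where
  zero := by rw [hG.zero, map_one]
  of_neg r hr := by rw [hG.of_neg r hr, map_zero]
  recurrence r hr := by simp only [hG.recurrence r hr, map_add, map_mul]

lemma one (hG : IsDualClassSeq a b c G) : G 1 = 0 := by
  rw [hG.recurrence 1 one_pos, hG.of_neg (1 - 2) (by decide), hG.of_neg (1 - 3) (by decide),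
    hG.of_neg (1 - 4) (by decide)]
  ring

lemma eq_of_le_one (hG : IsDualClassSeq a b c G) (hG' : IsDualClassSeq a b c' G') {r : ℤ}
    (hr : r ≤ 1) : G r = G' r := by
  obtain hneg | rfl | rfl : r < 0 ∨ r = 0 ∨ r = 1 := by omega
  · rw [hG.of_neg r hneg, hG'.of_neg r hneg]
  · rw [hG.zero, hG'.zero]
  · rw [hG.one, hG'.one]

variable [CharP R 2]

lemma recurrence_two_pow (hG : IsDualClassSeq a b c G) (s : ℕ) :
    ∀ r : ℤ, 4 * 2 ^ s - 4 < r → G r =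
      a ^ 2 ^ s * G (r - 2 * 2 ^ s) + b ^ 2 ^ s * G (r - 3 * 2 ^ s) +
        c ^ 2 ^ s * G (r - 4 * 2 ^ s) := by
  induction s with
  | zero => simpa using hG.recurrence
  | succ s ih =>
    intro r hr
    have q_pos : (0 : ℤ) < 2 ^ s := by positivity
    simp only [pow_succ _ s, pow_mul] at hr ⊢
    generalize (2 : ℤ) ^ s = q at *
    rw [ih r (by linarith), ih (r - 2 * q) (by linarith), ih (r - 3 * q) (by linarith),
      ih (r - 4 * q) (by linarith)]
    generalize a ^ 2 ^ s = A, b ^ 2 ^ s = B, c ^ 2 ^ s = C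
    -- Each mixed product arises twice, so only the squares survive.
    ring_nf
    linear_combination (A * B * G (r - q * 5) + A * C * G (r - q * 6) + B * C * G (r - q * 7)) *
      CharTwo.two_eq_zero (R := R)

lemma two_pow_add_two_sub (hG : IsDualClassSeq a b c G) (s : ℕ) {i : ℤ} (hi : 0 < i)
    (hi' : i < 4) :
    G (2 ^ (s + 2) - i) = a ^ 2 ^ s * G (2 ^ (s + 1) - i) + b ^ 2 ^ s * G (2 ^ s - i) := by
  have h := hG.recurrence_two_pow s (2 ^ (s + 2) - i) (by rw [pow_add]; linarith)
  rwa [show (2 : ℤ) ^ (s + 2) - i - 2 * 2 ^ s = 2 ^ (s + 1) - i by ring,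
    show (2 : ℤ) ^ (s + 2) - i - 3 * 2 ^ s = 2 ^ s - i by ring,
    show (2 : ℤ) ^ (s + 2) - i - 4 * 2 ^ s = -i by ring,
    hG.of_neg (-i) (neg_lt_zero.mpr hi), mul_zero, add_zero] at h

lemma eq_at_two_pow_sub (hG : IsDualClassSeq a b c G) (hG' : IsDualClassSeq a b c' G') {i : ℤ}
    (hi : 0 < i) (hi' : i < 4) (s : ℕ) : G (2 ^ s - i) = G' (2 ^ s - i) := by
  induction s using Nat.twoStepInduction with
  | zero => exact hG.eq_of_le_one hG' (by omega)
  | one => exact hG.eq_of_le_one hG' (by omega)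
  | more s ih ih' =>
    rw [hG.two_pow_add_two_sub s hi hi', hG'.two_pow_add_two_sub s hi hi', ih, ih']

lemma two_pow_sub_three (hG : IsDualClassSeq a b c G) (s : ℕ) : G (2 ^ s - 3) = 0 := by
  induction s using Nat.twoStepInduction with
  | zero => exact hG.of_neg _ (by decide)
  | one => exact hG.of_neg _ (by decide)
  | more s ih ih' =>
    rw [hG.two_pow_add_two_sub s (by decide) (by decide), ih, ih', mul_zero, mul_zero, add_zero]

end CommRing

section Polynomial

open scoped Polynomial

variable {R : Type*} [CommRing R] {a b : R} {G : ℤ → R[X]}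

lemma coeff_succ (hG : IsDualClassSeq (Polynomial.C a) (Polynomial.C b) Polynomial.X G) {r : ℤ}
    (hr : 0 < r) (k : ℕ) :
    (G r).coeff (k + 1) =
      a * (G (r - 2)).coeff (k + 1) + b * (G (r - 3)).coeff (k + 1) + (G (r - 4)).coeff k := by
  simp only [hG.recurrence r hr, Polynomial.coeff_add, Polynomial.coeff_C_mul,
    Polynomial.coeff_X_mul]

lemma coeff_eq_zero_of_lt (hG : IsDualClassSeq (Polynomial.C a) (Polynomial.C b) Polynomial.X G)
    (r : ℤ) (k : ℕ) (hrk : r < 4 * k) : (G r).coeff k = 0 := by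
  obtain hneg | rfl | hpos := lt_trichotomy r 0
  · rw [hG.of_neg r hneg, Polynomial.coeff_zero]
  · rw [hG.zero, Polynomial.coeff_one, if_neg (by omega)]
  · obtain ⟨k, rfl⟩ : ∃ l, k = l + 1 := Nat.exists_eq_add_one.mpr (by omega)
    rw [hG.coeff_succ hpos, coeff_eq_zero_of_lt hG (r - 2) (k + 1) (by omega),
      coeff_eq_zero_of_lt hG (r - 3) (k + 1) (by omega),
      coeff_eq_zero_of_lt hG (r - 4) k (by omega)]
    ring
termination_by r.toNat

lemma coeff_four_mul (hG : IsDualClassSeq (Polynomial.C a) (Polynomial.C b) Polynomial.X G)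
    (k : ℕ) : (G (4 * k)).coeff k = 1 := by
  induction k with
  | zero => simp [hG.zero]
  | succ k ih =>
    rw [hG.coeff_succ (by omega), hG.coeff_eq_zero_of_lt _ (k + 1) (by omega),
      hG.coeff_eq_zero_of_lt _ (k + 1) (by omega),
      show 4 * ((k + 1 : ℕ) : ℤ) - 4 = 4 * k by omega, ih]
    ring

lemma isMonicOfDegree_four_mul [Nontrivial R]
    (hG : IsDualClassSeq (Polynomial.C a) (Polynomial.C b) Polynomial.X G) (k : ℕ) :
    (G (4 * k)).IsMonicOfDegree k := by
  refine (Polynomial.isMonicOfDegree_iff _ _).mpr ⟨?_, hG.coeff_four_mul k⟩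
  exact Polynomial.natDegree_le_iff_coeff_eq_zero.mpr fun l hl =>
    hG.coeff_eq_zero_of_lt _ l (by omega)

end Polynomial

end IsDualClassSeq

/-- `R[x_0, …, x_n]` as the ring of polynomials in the last variable `x_n` over
`R[x_0, …, x_{n-1}]`. -/
noncomputable def lastVarEquiv (R : Type*) [CommSemiring R] (n : ℕ) :
    MvPolynomial (Fin (n + 1)) R ≃ₐ[R] Polynomial (MvPolynomial (Fin n) R) :=
  (renameEquiv R finSuccEquivLast).trans (optionEquivLeft R (Fin n))

section LastVariable

variable {R : Type*} [CommSemiring R] {n : ℕ}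

lemma lastVarEquiv_X_last : lastVarEquiv R n (X (Fin.last n)) = Polynomial.X := by
  simp [lastVarEquiv]

lemma lastVarEquiv_X_castSucc (i : Fin n) :
    lastVarEquiv R n (X i.castSucc) = Polynomial.C (X i) := by
  simp [lastVarEquiv]

lemma lastVarEquiv_rename_castSucc (q : MvPolynomial (Fin n) R) :
    lastVarEquiv R n (rename Fin.castSucc q) = Polynomial.C q := by
  induction q using MvPolynomial.induction_on with
  | C r => simp [lastVarEquiv]
  | add q q' hq hq' => rw [map_add, map_add, hq, hq', map_add]
  | mul_X q i hq => rw [map_mul, map_mul, hq, rename_X, lastVarEquiv_X_castSucc, map_mul]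

end LastVariable

lemma isDualClassSeq_g4 : IsDualClassSeq (X 0) (X 1) (X 2) g4 where
  zero := by rw [g4, if_pos le_rfl, if_pos rfl]
  of_neg r hr := by rw [g4, if_pos hr.le, if_neg hr.ne]
  recurrence r hr := by rw [g4, if_neg hr.not_ge]

lemma isDualClassSeq_g3 : IsDualClassSeq (X 0) (X 1) 0 g3 where
  zero := by rw [g3, if_pos le_rfl, if_pos rfl]
  of_neg r hr := by rw [g3, if_pos hr.le, if_neg hr.ne]
  recurrence r hr := by rw [g3, if_neg hr.not_ge, zero_mul, add_zero]

lemma isDualClassSeq_incl_g3 : IsDualClassSeq (X 0) (X 1) 0 fun r => incl (g3 r) := by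
  simpa [incl] using isDualClassSeq_g3.map incl

lemma isDualClassSeq_lastVarEquiv_g4 :
    IsDualClassSeq (Polynomial.C (X 0)) (Polynomial.C (X 1)) Polynomial.X
      fun r => lastVarEquiv (ZMod 2) 2 (g4 r) := by
  rw [← lastVarEquiv_X_castSucc, ← lastVarEquiv_X_castSucc, ← lastVarEquiv_X_last]
  exact isDualClassSeq_g4.map (lastVarEquiv (ZMod 2) 2)

lemma I3_two_pow (t : ℕ) : I3 (2 ^ t) = Ideal.span {g3 (2 ^ t - 2), g3 (2 ^ t - 1)} := by
  have hg : g3 (2 ^ t) = X 0 * g3 (2 ^ t - 2) := by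
    rw [isDualClassSeq_g3.recurrence _ (by positivity), isDualClassSeq_g3.two_pow_sub_three]
    ring
  rw [I3, Set.pair_comm, Set.insert_comm, hg]
  exact Submodule.span_insert_eq_span
    (Ideal.mul_mem_left _ _ (Ideal.subset_span (Set.mem_insert _ _)))

lemma I4_two_pow (t : ℕ) :
    I4 (2 ^ t) = (I3 (2 ^ t)).map incl ⊔ Ideal.span {g4 (2 ^ t)} := by
  have g4_eq_incl_g3 {i : ℤ} (hi : 0 < i) (hi' : i < 4) :
      g4 (2 ^ t - i) = incl (g3 (2 ^ t - i)) :=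
    isDualClassSeq_g4.eq_at_two_pow_sub isDualClassSeq_incl_g3 hi hi' t
  rw [I4, I3_two_pow, isDualClassSeq_g4.two_pow_sub_three, Ideal.span_insert_zero,
    g4_eq_incl_g3 (i := 2) (by decide) (by decide), g4_eq_incl_g3 (i := 1) (by decide) (by decide),
    Ideal.map_span, Set.image_pair, ← Ideal.span_union,
    Set.insert_union, Set.singleton_union]

lemma lastVarEquiv_incl (q : MvPolynomial (Fin 2) (ZMod 2)) :
    lastVarEquiv (ZMod 2) 2 (incl q) = Polynomial.C q :=
  lastVarEquiv_rename_castSucc q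

lemma map_lastVarEquiv_I4_two_pow (t : ℕ) :
    (I4 (2 ^ t)).map (lastVarEquiv (ZMod 2) 2).toRingEquiv =
      (I3 (2 ^ t)).map Polynomial.C ⊔ Ideal.span {lastVarEquiv (ZMod 2) 2 (g4 (2 ^ t))} := by
  have comp_incl : ((lastVarEquiv (ZMod 2) 2).toRingEquiv : _ →+* _).comp incl = Polynomial.C :=
    RingHom.ext lastVarEquiv_incl
  rw [I4_two_pow, Ideal.map_sup, Ideal.map_span, Set.image_singleton, ← comp_incl, ← Ideal.map_map]
  rfl

lemma lastVarEquiv_sum_incl_mul_X_pow (N : ℕ) (p : ℕ → MvPolynomial (Fin 2) (ZMod 2)) :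
    lastVarEquiv (ZMod 2) 2 (∑ j ∈ Finset.range N, incl (p j) * X 2 ^ j) =
      ∑ j ∈ Finset.range N, Polynomial.C (p j) * Polynomial.X ^ j := by
  simp only [map_sum, map_mul, map_pow, lastVarEquiv_incl, ← lastVarEquiv_X_last]
  rfl

/-- Lemma 2.6: for `t ≥ 3` and `p_0, …, p_{2^{t-2}-1} ∈ F_2[w_2,w_3]`, the sum
`Σ_j p_j w_4^j` lies in `I_{2^t,4}` iff every `p_j` lies in `I_{2^t,3}`. -/
theorem stmt3 (t : ℕ) (ht : 3 ≤ t) (p : ℕ → MvPolynomial (Fin 2) (ZMod 2)) :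
    (∑ j ∈ Finset.range (2 ^ (t - 2)), incl (p j) * X 2 ^ j) ∈ I4 (2 ^ t) ↔
      ∀ j < 2 ^ (t - 2), p j ∈ I3 (2 ^ t) := by
  have two_pow_eq : (2 : ℤ) ^ t = 4 * (2 ^ (t - 2) : ℕ) := by
    rw [← Nat.sub_add_cancel (show 2 ≤ t by omega), pow_add]
    simp [mul_comm]
  have monic := isDualClassSeq_lastVarEquiv_g4.isMonicOfDegree_four_mul (2 ^ (t - 2))
  rw [← two_pow_eq] at monic
  rw [← sum_range_C_mul_X_pow_mem_map_C_sup_span_iff monic,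
    ← map_lastVarEquiv_I4_two_pow, ← lastVarEquiv_sum_incl_mul_X_pow]
  exact Ideal.apply_mem_of_equiv_iff.symm
end

section
/- For every integer t ≥ 3, the identity w_4^{2^{t-1}-1} = g_{2^{t+1}-4} + w_2^{2^{t-1}}·g_{2^t-4} + w_3^{2^{t-1}}·g_{2^{t-1}-4} holds in the polynomial ring F_2[w_2,w_3,w_4]. -/
open MvPolynomial

/-!
Put `P = 1 + w₂ x² + w₃ x³ + w₄ x⁴` and `G = ∑ gᵣ xʳ`. In characteristic two the recurrence says
`P G = 1`, so for `q = 2 ^ s` we have `P ^ q G = P ^ (q - 1)`. Compare the coefficients of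
`x ^ (4 (q - 1))`: on the right it is the top coefficient `w₄ ^ (q - 1)`, and on the left the
Frobenius gives `P ^ q = 1 + w₂ ^ q x ^ (2 q) + w₃ ^ q x ^ (3 q) + w₄ ^ q x ^ (4 q)`, whose last
term has too large an order to contribute.
-/

section

variable {R : Type*} [CommSemiring R]

lemma coeff_pow_succ_mul_of_mul_eq_one {P : Polynomial R} {G : PowerSeries R}
    (hPG : (P : PowerSeries R) * G = 1) {d : ℕ} (hd : P.natDegree ≤ d) (m : ℕ) :
    PowerSeries.coeff (m * d) ((P : PowerSeries R) ^ (m + 1) * G) = P.coeff d ^ m := by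
  rw [pow_succ, mul_assoc, hPG, mul_one, ← Polynomial.coe_pow, Polynomial.coeff_coe,
    Polynomial.coeff_pow_of_natDegree_le hd]

/-- The total class `1 + w₂ + w₃ + w₄`, the powers of the polynomial variable recording the degrees
of the classes. As for `g4`, `w i` stands for `w_{i+2}`. At the variables of `F_2[w_2,w_3,w_4]` it
is inverse to the generating function of `g4`. -/
noncomputable def totalClass (w : Fin 3 → R) : Polynomial R :=
  1 + Polynomial.C (w 0) * Polynomial.X ^ 2 + Polynomial.C (w 1) * Polynomial.X ^ 3
    + Polynomial.C (w 2) * Polynomial.X ^ 4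

lemma natDegree_totalClass_le (w : Fin 3 → R) : (totalClass w).natDegree ≤ 4 := by
  unfold totalClass
  compute_degree

lemma coeff_four_totalClass (w : Fin 3 → R) : (totalClass w).coeff 4 = w 2 := by
  simp [totalClass, Polynomial.coeff_one, Polynomial.coeff_X_pow]

lemma totalClass_pow_expChar_pow (p : ℕ) [ExpChar R p] (w : Fin 3 → R) (s : ℕ) :
    totalClass w ^ p ^ s =
      1 + Polynomial.C (w 0 ^ p ^ s) * Polynomial.X ^ (2 * p ^ s)
        + Polynomial.C (w 1 ^ p ^ s) * Polynomial.X ^ (3 * p ^ s)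
        + Polynomial.C (w 2 ^ p ^ s) * Polynomial.X ^ (4 * p ^ s) := by
  simp only [totalClass, add_pow_expChar_pow, one_pow, mul_pow, ← pow_mul, Polynomial.C_pow]

end

lemma g4_zero : g4 0 = 1 := by
  rw [g4, if_pos le_rfl, if_pos rfl]

/-- The generating function `∑ gᵣ xʳ` of the polynomials `g4`, which vanish at negative indices. -/
noncomputable def g4Series : PowerSeries (MvPolynomial (Fin 3) (ZMod 2)) :=
  PowerSeries.mk fun n => g4 n

lemma coeff_X_pow_mul_g4Series (k n : ℕ) :
    PowerSeries.coeff n (PowerSeries.X ^ k * g4Series) = g4 (n - k) := by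
  rw [PowerSeries.coeff_X_pow_mul', g4Series]
  split_ifs with hkn
  · rw [PowerSeries.coeff_mk, Nat.cast_sub hkn]
  · rw [g4_of_neg (by omega)]

lemma coeff_totalClass_pow_two_pow_mul_g4Series (s n : ℕ) :
    PowerSeries.coeff n ((totalClass (X (R := ZMod 2))).toPowerSeries ^ 2 ^ s * g4Series) =
      g4 n + X 0 ^ 2 ^ s * g4 (n - 2 * 2 ^ s) + X 1 ^ 2 ^ s * g4 (n - 3 * 2 ^ s)
        + X 2 ^ 2 ^ s * g4 (n - 4 * 2 ^ s) := by
  have coeff_monomial_mul (w : MvPolynomial (Fin 3) (ZMod 2)) (k : ℕ) :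
      PowerSeries.coeff n (PowerSeries.C w * PowerSeries.X ^ k * g4Series) = w * g4 (n - k) := by
    rw [mul_assoc, PowerSeries.coeff_C_mul, coeff_X_pow_mul_g4Series]
  have coeff_g4Series : PowerSeries.coeff n g4Series = g4 n := PowerSeries.coeff_mk _ _
  rw [← Polynomial.coe_pow, totalClass_pow_expChar_pow 2]
  simp only [Polynomial.coe_add, Polynomial.coe_mul, Polynomial.coe_one, Polynomial.coe_C,
    Polynomial.coe_pow, Polynomial.coe_X, add_mul, one_mul, map_add, coeff_monomial_mul,
    coeff_g4Series]
  push_cast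
  rfl

lemma totalClass_mul_g4Series :
    (totalClass (X (R := ZMod 2))).toPowerSeries * g4Series = 1 := by
  ext1 n
  have hcoeff := coeff_totalClass_pow_two_pow_mul_g4Series 0 n
  simp only [pow_zero, pow_one, mul_one] at hcoeff
  rw [hcoeff, PowerSeries.coeff_one]
  split_ifs with hn
  · subst hn
    simp [g4_zero, g4_of_neg]
  · rw [add_assoc, add_assoc, CharTwo.add_eq_zero, ← add_assoc]
    exact g4_of_pos (by omega)

theorem stmt7_general (s : ℕ) :
    (X 2 : MvPolynomial (Fin 3) (ZMod 2)) ^ (2 ^ s - 1) =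
      g4 (2 ^ (s + 2) - 4) + X 0 ^ 2 ^ s * g4 (2 ^ (s + 1) - 4)
        + X 1 ^ 2 ^ s * g4 (2 ^ s - 4) := by
  have hq : 2 ^ s - 1 + 1 = 2 ^ s := Nat.sub_add_cancel Nat.one_le_two_pow
  have hindex : (((2 ^ s - 1) * 4 : ℕ) : ℤ) = 4 * 2 ^ s - 4 := by
    push_cast [Nat.one_le_two_pow]
    ring
  have htop := coeff_pow_succ_mul_of_mul_eq_one totalClass_mul_g4Series
    (natDegree_totalClass_le _) (2 ^ s - 1)
  rw [hq, coeff_totalClass_pow_two_pow_mul_g4Series, coeff_four_totalClass, hindex,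
    g4_of_neg (by omega : 4 * 2 ^ s - 4 - 4 * 2 ^ s < (0 : ℤ)), mul_zero, add_zero] at htop
  rw [← htop]
  ring_nf

/-- Lemma 3.4: for every `t ≥ 3`,
`w_4^{2^{t-1}-1} = g_{2^{t+1}-4} + w_2^{2^{t-1}} g_{2^t-4} + w_3^{2^{t-1}} g_{2^{t-1}-4}`
in `F_2[w_2,w_3,w_4]`. -/
theorem stmt7 (t : ℕ) (ht : 3 ≤ t) :
    (X 2 : MvPolynomial (Fin 3) (ZMod 2)) ^ (2 ^ (t - 1) - 1) =
      g4 (2 ^ (t + 1) - 4) + X 0 ^ 2 ^ (t - 1) * g4 (2 ^ t - 4)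
        + X 1 ^ 2 ^ (t - 1) * g4 (2 ^ (t - 1) - 4) := by
  obtain ⟨s, rfl⟩ : ∃ s, t = s + 1 := ⟨t - 1, by omega⟩
  exact stmt7_general s
end

section
/- For every integer t ≥ 3: w_4^{2^{t-1}} ∈ I_{2^t,4} and w_4^{2^{t-1}-1} ∉ I_{2^t,4}; that is, the image of w_4 in F_2[w_2,w_3,w_4]/I_{2^t,4} has height exactly 2^{t-1}-1. (This expresses that the height of the Stiefel–Whitney class w̃_4 in H^*(G̃_{n,4}; F_2) equals 2^{t-1}-1 for n ∈ {2^t, 2^t+1}, since I_{2^t+1,4} = I_{2^t,4}.) -/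
open MvPolynomial

/-!
Write `q = 2 ^ t`. Iterating the defining recurrence with the Frobenius gives
`g_r = w₂ ^ m g_{r-2m} + w₃ ^ m g_{r-3m} + w₄ ^ m g_{r-4m}` for `m = 2 ^ i` and `r > 4m - 4`.
For `m = q / 2` and `r = 2q` this expresses `w₄ ^ (q / 2)` through elements of `I_q`, because
`w₃ ^ (q / 2 - 1) = g_{3q/2-3}` lies in `I_q`.

For the lower bound, `g_{q-3} = 0` and the doubling formulas for `g_{2n}` and `g_{2n+1}` show that
`I_{2q} = (a, w₃ b, c)` for `a = g_{2q-2}`, `b = g_{q-2}²`, `c = g_{2q}`, whereas `(a, b, c)` is the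
Frobenius power `(g_{q-2}², g_{q-1}², g_q²)` of `I_q`. As `w₃` is regular modulo `(a, c)`, that
Frobenius power is the colon ideal `I_{2q} : w₃`. The polynomial ring is free over its subring of
squares with the squarefree monomials as a basis, so reading off the coefficient of `w₂w₃w₄` shows
that `w₂w₃²w₄s² ∈ I_{2q}` implies `s ∈ I_q`. Starting from `w₄³ ≡ w₂w₃²w₄` modulo `I_8`, this
yields by induction that `w₂ ^ (q/8 - 1) w₃ ^ (q/4 - 2) w₄ ^ (q/2 - 1)` is not in `I_q`.
-/

namespace OrientedGrassmannian

section ExpandComponent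

variable {σ R : Type*} {p : ℕ} {d : σ →₀ ℕ}

theorem smul_add_right_injective (hp : p ≠ 0) (d : σ →₀ ℕ) :
    Function.Injective fun n : σ →₀ ℕ => p • n + d :=
  (add_left_injective d).comp (smul_right_injective _ hp)

theorem smul_le_smul_add_iff (hd : ∀ i, d i < p) {m n : σ →₀ ℕ} :
    p • m ≤ p • n + d ↔ m ≤ n := by
  simp only [Finsupp.le_def, Finsupp.add_apply, Finsupp.smul_apply, smul_eq_mul]
  refine forall_congr' fun i => ⟨fun h => ?_, fun h => ?_⟩
  · by_contra! hlt
    have := Nat.mul_le_mul_left p (Nat.succ_le_of_lt hlt)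
    have := hd i
    grind
  · exact (Nat.mul_le_mul_left p h).trans (Nat.le_add_right _ _)

section CommSemiring

variable [CommSemiring R]

/-- The additive map `R[X] → R[X]` sending `f` to the polynomial whose coefficient at `X ^ n` is the
coefficient of `f` at `X ^ (p n + d)`. When all entries of `d` are less than `p`, this is the
coordinate of `f` at `X ^ d` in the basis of `R[X]` over its subring `R[X ^ p]`, the latter
identified with `R[X]` by `expand p`; over `F_p`, with all entries of `d` equal to `p - 1`,
it is the Cartier operator. -/
noncomputable def expandComponent (hp : p ≠ 0) (d : σ →₀ ℕ) :
    MvPolynomial σ R →+ MvPolynomial σ R :=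
  AddMonoidAlgebra.comapDomainAddMonoidHom _ (smul_add_right_injective hp d)

theorem coeff_expandComponent (hp : p ≠ 0) (d : σ →₀ ℕ) (f : MvPolynomial σ R) (n : σ →₀ ℕ) :
    coeff n (expandComponent hp d f) = coeff (p • n + d) f :=
  rfl

theorem expandComponent_monomial_self (hp : p ≠ 0) (d : σ →₀ ℕ) :
    expandComponent hp d (monomial d (1 : R)) = 1 := by
  classical
  ext n
  have hn : d = p • n + d ↔ 0 = n := by
    simpa using (smul_add_right_injective hp d).eq_iff (a := 0) (b := n)
  simp only [coeff_expandComponent, coeff_monomial, coeff_one, hn]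

theorem expandComponent_mul_expand (hp : p ≠ 0) (hd : ∀ i, d i < p) (f a : MvPolynomial σ R) :
    expandComponent hp d (f * expand p a) = expandComponent hp d f * a := by
  classical
  induction a using MvPolynomial.induction_on' with
  | add a b ha hb => simp only [map_add, mul_add, ha, hb]
  | monomial m r =>
    ext n
    simp only [coeff_expandComponent, expand_monomial, coeff_mul_monomial',
      smul_le_smul_add_iff hd]
    split_ifs with hmn
    · obtain ⟨k, rfl⟩ := exists_add_of_le hmn
      rw [add_tsub_cancel_left, smul_add, add_assoc, add_tsub_cancel_left]
    · rfl

end CommSemiring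

variable [CommRing R]

theorem expandComponent_mem_of_mem_map_expand (hp : p ≠ 0) (hd : ∀ i, d i < p)
    {I : Ideal (MvPolynomial σ R)} {f : MvPolynomial σ R} (hf : f ∈ I.map (expand p)) :
    expandComponent hp d f ∈ I := by
  suffices ∀ h, expandComponent hp d (h * f) ∈ I by simpa using this 1
  induction hf using Submodule.span_induction with
  | mem f hf =>
    obtain ⟨a, ha, rfl⟩ := hf
    intro h
    exact (expandComponent_mul_expand hp hd h a).symm ▸ I.mul_mem_left _ ha
  | zero => simp
  | add f f' _ _ hf hf' =>
    intro h
    rw [mul_add, map_add]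
    exact I.add_mem (hf h) (hf' h)
  | smul r f _ hf =>
    intro h
    rw [smul_eq_mul, ← mul_assoc]
    exact hf (h * r)

theorem mem_of_monomial_mul_expand_mem_map_expand (hp : p ≠ 0) (hd : ∀ i, d i < p)
    {I : Ideal (MvPolynomial σ R)} {s : MvPolynomial σ R}
    (hs : monomial d 1 * expand p s ∈ I.map (expand p)) : s ∈ I := by
  simpa only [expandComponent_mul_expand hp hd, expandComponent_monomial_self, one_mul]
    using expandComponent_mem_of_mem_map_expand hp hd hs

end ExpandComponent

section Retraction

/-- The map `φ` stands for the quotient map `R → R ⧸ (x)`, split by a ring homomorphism, so this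
says that `x` is regular modulo `(a, c)` if `a` and `c` are relatively prime modulo `x`. -/
theorem mem_span_pair_of_mul_mem_span_pair {R : Type*} [CommRing R] [IsDomain R]
    [DecompositionMonoid R] {x a c f : R} (φ : R →+* R) (hx : x ≠ 0) (hφx : φ x = 0)
    (hφ : ∀ p, x ∣ p - φ p) (ha : φ a ≠ 0) (hac : IsRelPrime (φ a) (φ c))
    (hf : x * f ∈ Ideal.span {a, c}) : f ∈ Ideal.span {a, c} := by
  obtain ⟨u, v, huv⟩ := Ideal.mem_span_pair.mp hf
  have hφuv : φ u * φ a + φ v * φ c = 0 := by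
    simpa only [map_add, map_mul, hφx, zero_mul] using congrArg φ huv
  obtain ⟨d, hv⟩ : φ a ∣ φ v :=
    hac.dvd_of_dvd_mul_right ⟨-φ u, by linear_combination hφuv⟩
  have hu : φ u = -d * φ c :=
    mul_right_cancel₀ ha (by linear_combination hφuv - φ c * hv)
  obtain ⟨u', hu'⟩ := hφ u
  obtain ⟨v', hv'⟩ := hφ v
  obtain ⟨a', ha'⟩ := hφ a
  obtain ⟨c', hc'⟩ := hφ c
  refine Ideal.mem_span_pair.mpr ⟨u' + d * c', v' - d * a', mul_left_cancel₀ hx ?_⟩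
  linear_combination huv - a * hu' - a * hu - c * hv' - c * hv - a * d * hc' + c * d * ha'

variable {σ R : Type*} [DecidableEq σ] [CommRing R]

theorem X_dvd_sub_aeval_update_zero (i : σ) (f : MvPolynomial σ R) :
    X i ∣ f - aeval (Function.update X i 0) f := by
  rw [← Ideal.mem_span_singleton, ← Ideal.Quotient.eq]
  have hmk : (Ideal.Quotient.mkₐ R (Ideal.span {(X i : MvPolynomial σ R)})).comp
      (aeval (Function.update X i 0)) = Ideal.Quotient.mkₐ R _ := by
    refine algHom_ext fun j => ?_
    rcases eq_or_ne j i with rfl | hj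
    · simp
    · simp [hj]
  exact (DFunLike.congr_fun hmk f).symm

end Retraction

local notation "w₂" => (X 0 : MvPolynomial (Fin 3) (ZMod 2))
local notation "w₃" => (X 1 : MvPolynomial (Fin 3) (ZMod 2))
local notation "w₄" => (X 2 : MvPolynomial (Fin 3) (ZMod 2))

section Recurrences

theorem g4_of_neg {r : ℤ} (hr : r < 0) : g4 r = 0 := by
  rw [g4, if_pos hr.le, if_neg hr.ne]

theorem g4_zero : g4 0 = 1 := by
  rw [g4, if_pos le_rfl, if_pos rfl]

theorem g4_of_pos {r : ℤ} (hr : 0 < r) :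
    g4 r = w₂ * g4 (r - 2) + w₃ * g4 (r - 3) + w₄ * g4 (r - 4) := by
  rw [g4, if_neg hr.not_ge]

theorem g4_eq_two_pow_recurrence (i : ℕ) {r : ℤ} (hr : 4 * 2 ^ i - 4 < r) :
    g4 r = w₂ ^ 2 ^ i * g4 (r - 2 * 2 ^ i) + w₃ ^ 2 ^ i * g4 (r - 3 * 2 ^ i) +
      w₄ ^ 2 ^ i * g4 (r - 4 * 2 ^ i) := by
  induction i generalizing r with
  | zero => simpa using g4_of_pos (by simpa using hr)
  | succ i ih =>
    simp only [pow_succ, pow_mul] at hr ⊢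
    set m : ℤ := 2 ^ i
    have hm : 0 < m := by positivity
    have h₀ := ih (r := r) (by omega)
    have h₂ := ih (r := r - 2 * m) (by omega)
    have h₃ := ih (r := r - 3 * m) (by omega)
    have h₄ := ih (r := r - 4 * m) (by omega)
    ring_nf at h₀ h₂ h₃ h₄ ⊢
    linear_combination h₀ + w₂ ^ 2 ^ i * h₂ + w₃ ^ 2 ^ i * h₃ + w₄ ^ 2 ^ i * h₄ +
      (w₂ ^ 2 ^ i * w₃ ^ 2 ^ i * g4 (r - m * 5) + w₂ ^ 2 ^ i * w₄ ^ 2 ^ i * g4 (r - m * 6) +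
        w₃ ^ 2 ^ i * w₄ ^ 2 ^ i * g4 (r - m * 7)) *
          CharTwo.two_eq_zero (R := MvPolynomial (Fin 3) (ZMod 2))

theorem g4_two_mul_and_two_mul_add_one (n : ℤ) :
    g4 (2 * n) = g4 n ^ 2 + w₂ * g4 (n - 1) ^ 2 + w₄ * g4 (n - 2) ^ 2 ∧
      g4 (2 * n + 1) = w₃ * g4 (n - 1) ^ 2 := by
  rcases lt_trichotomy n 0 with hn | rfl | hn
  · simp (disch := omega) [g4_of_neg]
  · have h₁ : g4 1 = 0 := by simp [g4_of_pos one_pos, g4_of_neg]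
    simp [g4_zero, g4_of_neg, h₁]
  obtain ⟨even₁, odd₁⟩ := g4_two_mul_and_two_mul_add_one (n - 1)
  obtain ⟨even₂, odd₂⟩ := g4_two_mul_and_two_mul_add_one (n - 2)
  have even := g4_of_pos (r := 2 * n) (by omega)
  have odd := g4_of_pos (r := 2 * n + 1) (by omega)
  have sq : g4 n ^ 2 = w₂ ^ 2 * g4 (n - 2) ^ 2 + w₃ ^ 2 * g4 (n - 3) ^ 2 +
      w₄ ^ 2 * g4 (n - 4) ^ 2 := by
    rw [g4_of_pos hn, CharTwo.add_sq, CharTwo.add_sq]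
    ring
  have two_eq_zero := CharTwo.two_eq_zero (R := MvPolynomial (Fin 3) (ZMod 2))
  ring_nf at even₁ odd₁ even₂ odd₂ even odd sq ⊢
  constructor
  · linear_combination even + w₂ * even₁ + w₄ * even₂ + w₃ * odd₂ - sq +
      w₂ * w₄ * g4 (-3 + n) ^ 2 * two_eq_zero
  · linear_combination odd + w₂ * odd₁ + w₄ * odd₂ + w₃ * even₁ +
      (w₂ * w₃ * g4 (-2 + n) ^ 2 + w₃ * w₄ * g4 (-3 + n) ^ 2) * two_eq_zero
termination_by n.toNat
decreasing_by all_goals omega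

theorem g4_two_mul (n : ℤ) :
    g4 (2 * n) = g4 n ^ 2 + w₂ * g4 (n - 1) ^ 2 + w₄ * g4 (n - 2) ^ 2 :=
  (g4_two_mul_and_two_mul_add_one n).1

theorem g4_two_mul_add_one (n : ℤ) : g4 (2 * n + 1) = w₃ * g4 (n - 1) ^ 2 :=
  (g4_two_mul_and_two_mul_add_one n).2

theorem g4_two_pow_sub_three (t : ℕ) : g4 (2 ^ t - 3) = 0 := by
  induction t with
  | zero => exact g4_of_neg (by norm_num)
  | succ t ih =>
    rw [show (2 : ℤ) ^ (t + 1) - 3 = 2 * (2 ^ t - 2) + 1 by ring, g4_two_mul_add_one,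
      show (2 : ℤ) ^ t - 2 - 1 = 2 ^ t - 3 by ring, ih, zero_pow two_ne_zero, mul_zero]

theorem g4_two_pow_succ_sub_two (t : ℕ) :
    g4 (2 ^ (t + 1) - 2) = g4 (2 ^ t - 1) ^ 2 + w₂ * g4 (2 ^ t - 2) ^ 2 := by
  rw [show (2 : ℤ) ^ (t + 1) - 2 = 2 * (2 ^ t - 1) by ring, g4_two_mul,
    show (2 : ℤ) ^ t - 1 - 1 = 2 ^ t - 2 by ring, show (2 : ℤ) ^ t - 1 - 2 = 2 ^ t - 3 by ring,
    g4_two_pow_sub_three, zero_pow two_ne_zero, mul_zero, add_zero]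

theorem g4_two_pow_succ_sub_one (t : ℕ) : g4 (2 ^ (t + 1) - 1) = w₃ * g4 (2 ^ t - 2) ^ 2 := by
  rw [show (2 : ℤ) ^ (t + 1) - 1 = 2 * (2 ^ t - 1) + 1 by ring, g4_two_mul_add_one,
    show (2 : ℤ) ^ t - 1 - 1 = 2 ^ t - 2 by ring]

theorem g4_two_pow_succ (t : ℕ) :
    g4 (2 ^ (t + 1)) = g4 (2 ^ t) ^ 2 + w₂ * g4 (2 ^ t - 1) ^ 2 + w₄ * g4 (2 ^ t - 2) ^ 2 := by
  rw [pow_succ', g4_two_mul]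

theorem g4_two_pow_add_two (i : ℕ) :
    g4 (2 ^ (i + 2)) = w₂ ^ 2 ^ i * g4 (2 ^ (i + 1)) + w₃ ^ 2 ^ i * g4 (2 ^ i) + w₄ ^ 2 ^ i := by
  rw [g4_eq_two_pow_recurrence i (by rw [pow_add]; omega)]
  ring_nf
  rw [g4_zero, mul_one]

theorem two_pow_succ_sub_one (k : ℕ) : 2 ^ (k + 1) - 1 = (2 ^ k - 1) * 2 + 1 := by
  have := k.one_le_two_pow
  omega

theorem g4_three_mul_two_pow_sub_three (k : ℕ) : g4 (3 * 2 ^ k - 3) = w₃ ^ (2 ^ k - 1) := by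
  induction k with
  | zero => simp [g4_zero]
  | succ k ih =>
    rw [show (3 : ℤ) * 2 ^ (k + 1) - 3 = 2 * (3 * 2 ^ k - 2) + 1 by ring, g4_two_mul_add_one,
      show (3 : ℤ) * 2 ^ k - 2 - 1 = 3 * 2 ^ k - 3 by ring, ih,
      two_pow_succ_sub_one, pow_succ _ (_ * 2), pow_mul, mul_comm]

end Recurrences

section Membership

theorem g4_mem_I4 {n r : ℤ} (hn : 0 ≤ n) (hr : n - 3 ≤ r) : g4 r ∈ I4 n := by
  by_cases hrn : r ≤ n
  · apply Ideal.subset_span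
    obtain rfl | rfl | rfl | rfl : r = n - 3 ∨ r = n - 2 ∨ r = n - 1 ∨ r = n := by omega
    all_goals simp
  · rw [g4_of_pos (by omega)]
    have mem₂ := g4_mem_I4 (r := r - 2) hn (by omega)
    have mem₃ := g4_mem_I4 (r := r - 3) hn (by omega)
    have mem₄ := g4_mem_I4 (r := r - 4) hn (by omega)
    exact add_mem (add_mem (Ideal.mul_mem_left _ _ mem₂) (Ideal.mul_mem_left _ _ mem₃))
      (Ideal.mul_mem_left _ _ mem₄)
termination_by (r - n).toNat
decreasing_by all_goals omega

theorem w3_pow_mem_I4 (k : ℕ) : w₃ ^ (2 ^ k - 1) ∈ I4 (2 ^ (k + 1)) := by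
  rw [← g4_three_mul_two_pow_sub_three]
  exact g4_mem_I4 (by positivity) (by rw [pow_succ]; have := pow_pos (two_pos (α := ℤ)) k; omega)

theorem w4_pow_mem_I4 (k : ℕ) : w₄ ^ 2 ^ k ∈ I4 (2 ^ (k + 1)) := by
  have mem_w₃ : w₃ ^ 2 ^ k ∈ I4 (2 ^ (k + 1)) :=
    Ideal.mem_of_dvd _ (pow_dvd_pow _ (Nat.sub_le _ _)) (w3_pow_mem_I4 k)
  have mem_g4 : g4 (2 ^ (k + 1)) ∈ I4 (2 ^ (k + 1)) := g4_mem_I4 (by positivity) (by omega)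
  have mem_g4_double : g4 (2 ^ (k + 2)) ∈ I4 (2 ^ (k + 1)) :=
    g4_mem_I4 (by positivity) (by have := pow_pos (two_pos (α := ℤ)) k; grind)
  rw [g4_two_pow_add_two] at mem_g4_double
  exact (Submodule.add_mem_iff_right _ (add_mem (Ideal.mul_mem_left _ _ mem_g4)
    (Ideal.mul_mem_right _ _ mem_w₃))).mp mem_g4_double

end Membership

section Nonmembership

theorem I4_two_pow (t : ℕ) :
    I4 (2 ^ t) = Ideal.span {g4 (2 ^ t - 2), g4 (2 ^ t - 1), g4 (2 ^ t)} := by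
  rw [I4, g4_two_pow_sub_three, Ideal.span_insert_zero]

theorem map_expand_I4_two_pow (t : ℕ) :
    (I4 (2 ^ t)).map (expand 2) =
      Ideal.span {g4 (2 ^ t - 2) ^ 2, g4 (2 ^ t - 1) ^ 2, g4 (2 ^ t) ^ 2} := by
  simp only [I4_two_pow, Ideal.map_span, Set.image_insert_eq, Set.image_singleton, expand_zmod]

theorem span_pair_le_map_expand_I4 (t : ℕ) :
    Ideal.span {g4 (2 ^ (t + 1) - 2), g4 (2 ^ (t + 1))} ≤ (I4 (2 ^ t)).map (expand 2) := by
  rw [map_expand_I4_two_pow, Ideal.span_le, Set.pair_subset_iff, g4_two_pow_succ,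
    g4_two_pow_succ_sub_two]
  exact ⟨Ideal.mem_span_insert.mpr ⟨w₂, _, Ideal.mem_span_pair.mpr ⟨1, 0, rfl⟩, by ring⟩,
    Ideal.mem_span_insert.mpr ⟨w₄, _, Ideal.mem_span_pair.mpr ⟨w₂, 1, rfl⟩, by ring⟩⟩

theorem aeval_update_zero_g4_two_pow_succ_sub_two (t : ℕ) :
    aeval (Function.update X 1 0) (g4 (2 ^ (t + 1) - 2)) = w₂ ^ (2 ^ t - 1) := by
  induction t with
  | zero => simp [g4_zero]
  | succ t ih =>
    rw [g4_two_pow_succ_sub_two, g4_two_pow_succ_sub_one, two_pow_succ_sub_one,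
      pow_succ _ (_ * 2), pow_mul, ← ih]
    simp [mul_comm]

theorem not_w2_dvd_aeval_update_zero_g4_two_pow (t : ℕ) :
    ¬ w₂ ∣ aeval (Function.update X 1 0) (g4 (2 ^ (t + 2))) := by
  intro hdvd
  have := map_dvd (aeval (![0, 0, 1] : Fin 3 → ZMod 2)) hdvd
  rw [g4_two_pow_add_two] at this
  simp at this

theorem mem_span_pair_of_w3_mul_mem (t : ℕ) {f : MvPolynomial (Fin 3) (ZMod 2)}
    (hf : w₃ * f ∈ Ideal.span {g4 (2 ^ (t + 2) - 2), g4 (2 ^ (t + 2))}) :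
    f ∈ Ideal.span {g4 (2 ^ (t + 2) - 2), g4 (2 ^ (t + 2))} := by
  have image_eq := aeval_update_zero_g4_two_pow_succ_sub_two (t + 1)
  refine mem_span_pair_of_mul_mem_span_pair
    (aeval (Function.update X 1 0) : _ →ₐ[ZMod 2] MvPolynomial (Fin 3) (ZMod 2)).toRingHom
    (X_ne_zero 1) (by simp) (X_dvd_sub_aeval_update_zero 1) ?_ ?_ hf
  · exact image_eq ▸ pow_ne_zero _ (X_ne_zero 0)
  · exact image_eq ▸ (X_prime.irreducible.isRelPrime_iff_not_dvd.mpr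
      (not_w2_dvd_aeval_update_zero_g4_two_pow t)).pow_left

theorem mem_map_expand_I4_of_w3_mul_mem_I4 (t : ℕ) {f : MvPolynomial (Fin 3) (ZMod 2)}
    (hf : w₃ * f ∈ I4 (2 ^ (t + 2))) : f ∈ (I4 (2 ^ (t + 1))).map (expand 2) := by
  set b := g4 (2 ^ (t + 1) - 2) ^ 2 with hb
  rw [I4_two_pow, g4_two_pow_succ_sub_one, Set.insert_comm, Ideal.mem_span_insert'] at hf
  obtain ⟨y, hy⟩ := hf
  have hfy : f + y * b ∈ Ideal.span {g4 (2 ^ (t + 2) - 2), g4 (2 ^ (t + 2))} :=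
    mem_span_pair_of_w3_mul_mem t (by convert hy using 1; ring)
  have hb_mem : b ∈ (I4 (2 ^ (t + 1))).map (expand 2) := by
    rw [map_expand_I4_two_pow]
    exact Ideal.subset_span (by simp [hb])
  exact (Submodule.add_mem_iff_left _ (Ideal.mul_mem_left _ y hb_mem)).mp
    (span_pair_le_map_expand_I4 _ hfy)

theorem mem_I4_of_mul_sq_mem_I4 (t : ℕ) {s : MvPolynomial (Fin 3) (ZMod 2)}
    (hs : w₂ * w₃ ^ 2 * w₄ * s ^ 2 ∈ I4 (2 ^ (t + 2))) : s ∈ I4 (2 ^ (t + 1)) := by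
  have monomial_one : monomial (Finsupp.equivFunOnFinite.symm 1) 1 = w₂ * w₃ * w₄ := by
    simp [monomial_eq, Fin.prod_univ_three]
  refine mem_of_monomial_mul_expand_mem_map_expand (p := 2)
    (d := Finsupp.equivFunOnFinite.symm 1) two_ne_zero (by simp)
    (mem_map_expand_I4_of_w3_mul_mem_I4 t ?_)
  rw [monomial_one, expand_zmod]
  convert hs using 1
  ring

theorem constantCoeff_g4 {r : ℤ} (hr : r ≠ 0) : constantCoeff (g4 r) = 0 := by
  rcases hr.lt_or_gt with hr | hr
  · rw [g4_of_neg hr, map_zero]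
  · simp [g4_of_pos hr]

theorem one_notMem_I4 {n : ℤ} (hn : 3 < n) : 1 ∉ I4 n := by
  have le_ker : I4 n ≤ RingHom.ker constantCoeff := by
    rw [I4, Ideal.span_le]
    rintro _ (rfl | rfl | rfl | rfl) <;> exact constantCoeff_g4 (by omega)
  exact fun h => one_ne_zero ((map_one constantCoeff).symm.trans (le_ker h))

theorem w4_cube_sub_mem_I4_eight : w₄ ^ 3 - w₂ * w₃ ^ 2 * w₄ ∈ I4 8 := by
  have g4_one : g4 1 = 0 := by simp [g4_of_pos, g4_of_neg]
  have g4_two : g4 2 = w₂ := by simp [g4_of_pos, g4_of_neg, g4_zero]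
  have g4_three : g4 3 = w₃ := by simp [g4_of_pos, g4_of_neg, g4_zero]
  have g4_four : g4 4 = w₂ ^ 2 + w₄ := by
    simpa [g4_one, g4_two, g4_zero, CharTwo.add_sq] using g4_two_mul 2
  have g4_six : g4 6 = w₃ ^ 2 + w₂ ^ 3 := by
    have := g4_two_mul 3
    norm_num [g4_one, g4_two, g4_three] at this
    rw [this]
    ring
  have g4_eight : g4 8 = (w₂ ^ 2 + w₄) ^ 2 + w₂ * w₃ ^ 2 + w₄ * w₂ ^ 2 := by
    have := g4_two_mul 4
    norm_num [g4_two, g4_three, g4_four] at this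
    exact this
  have combination : w₄ ^ 3 - w₂ * w₃ ^ 2 * w₄ = w₂ ^ 3 * g4 6 + (w₂ ^ 2 + w₄) * g4 8 := by
    rw [g4_six, g4_eight]
    linear_combination -(w₂ ^ 3 * w₃ ^ 2 + w₂ ^ 6 + 2 * w₂ ^ 4 * w₄ + 2 * w₂ ^ 2 * w₄ ^ 2 +
      w₂ * w₃ ^ 2 * w₄) * CharTwo.two_eq_zero (R := MvPolynomial (Fin 3) (ZMod 2))
  rw [combination]
  exact add_mem (Ideal.mul_mem_left _ _ (g4_mem_I4 (by norm_num) (by norm_num)))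
    (Ideal.mul_mem_left _ _ (g4_mem_I4 (by norm_num) (by norm_num)))

/-- The degree `3 * 2 ^ (k + 3) - 12` of the monomial is the socle degree of the complete
intersection `I4 (2 ^ (k + 3))`. -/
theorem socle_monomial_notMem_I4 (k : ℕ) :
    w₂ ^ (2 ^ k - 1) * w₃ ^ (2 * (2 ^ k - 1)) * w₄ ^ (2 ^ (k + 2) - 1) ∉ I4 (2 ^ (k + 3)) := by
  induction k with
  | zero =>
    intro h
    have mem : w₂ * w₃ ^ 2 * w₄ ∈ I4 8 :=
      (Submodule.sub_mem_iff_right _ (by simpa using h)).mp w4_cube_sub_mem_I4_eight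
    refine one_notMem_I4 (n := 2 ^ 2) (by norm_num) (mem_I4_of_mul_sq_mem_I4 1 ?_)
    simpa using mem
  | succ k ih =>
    refine fun h => ih (mem_I4_of_mul_sq_mem_I4 (k + 2) ?_)
    convert h using 1
    rw [two_pow_succ_sub_one k, two_pow_succ_sub_one (k + 2)]
    ring

end Nonmembership

end OrientedGrassmannian

/-- Proposition 3.5: for every `t ≥ 3`, `w_4^{2^{t-1}} ∈ I_{2^t,4}` and
`w_4^{2^{t-1}-1} ∉ I_{2^t,4}`, i.e. the image of `w_4` in `F_2[w_2,w_3,w_4]/I_{2^t,4}`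
has height exactly `2^{t-1} - 1`. -/
theorem stmt8 (t : ℕ) (ht : 3 ≤ t) :
    (X 2 : MvPolynomial (Fin 3) (ZMod 2)) ^ 2 ^ (t - 1) ∈ I4 (2 ^ t) ∧
      (X 2 : MvPolynomial (Fin 3) (ZMod 2)) ^ (2 ^ (t - 1) - 1) ∉ I4 (2 ^ t) := by
  obtain ⟨k, rfl⟩ := Nat.exists_eq_add_of_le' ht
  exact ⟨OrientedGrassmannian.w4_pow_mem_I4 (k + 2), fun h =>
    OrientedGrassmannian.socle_monomial_notMem_I4 k (Ideal.mul_mem_left _ _ h)⟩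
end
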